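/- For any two vectors v, w ∈ T, the real inner product ⟨v,w⟩_ℝ lies in the set {−1, −τ/2, −1/2, −(τ−1)/2, 0, (τ−1)/2, 1/2, τ/2, 1}, where τ = (1+√5)/2 is the golden ratio; these are exactly the cosines of the angles occurring between roots of the non-crystallographic root system H₄. -/

import Mathlib

noncomputable section
open Real Complex

namespace Triacontagonal

/-- The golden ratio. -/
def τ : ℝ := (1 + Real.sqrt 5) / 2

/-- The constant 3^(-1/2) * 5^(-1/4). -/
def k0 : ℝ := (3 : ℝ) ^ (-(1:ℝ)/2) * (5 : ℝ) ^ (-(1:ℝ)/4)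

/-- `a` is the positive real with 2a² = 1 + 3^(-1/2)·5^(-1/4)·τ^(3/2). -/
def a : ℝ := Real.sqrt ((1 + k0 * τ ^ ((3:ℝ)/2)) / 2)

/-- `b` is the positive real with 2b² = 1 + 3^(-1/2)·5^(-1/4)·τ^(-3/2). -/
def b : ℝ := Real.sqrt ((1 + k0 * τ ^ (-((3:ℝ)/2))) / 2)

/-- `c` is the positive real with 2c² = 1 - 3^(-1/2)·5^(-1/4)·τ^(-3/2). -/
def c : ℝ := Real.sqrt ((1 - k0 * τ ^ (-((3:ℝ)/2))) / 2)

/-- `d` is the positive real with 2d² = 1 - 3^(-1/2)·5^(-1/4)·τ^(3/2). -/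
def d : ℝ := Real.sqrt ((1 - k0 * τ ^ ((3:ℝ)/2)) / 2)

/-- `ω = exp(iπ/30)`, a primitive 60th root of unity. -/
def ω : ℂ := Complex.exp (Real.pi * Complex.I / 30)

/-- The four cycles of 30 vectors each in ℂ², the H₄ root system. -/
def A (n : Fin 30) : Fin 2 → ℂ :=
  ![(a : ℂ) * ω ^ (2 * (n : ℕ)), (d : ℂ) * ω ^ (22 * (n : ℕ))]

def B (n : Fin 30) : Fin 2 → ℂ :=
  ![(b : ℂ) * ω ^ (2 * (n : ℕ) + 1), (c : ℂ) * ω ^ (22 * (n : ℕ) + 11)]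

def C (n : Fin 30) : Fin 2 → ℂ :=
  ![(c : ℂ) * ω ^ (2 * (n : ℕ) + 1), -((b : ℂ) * ω ^ (22 * (n : ℕ) + 11))]

def D (n : Fin 30) : Fin 2 → ℂ :=
  ![(d : ℂ) * ω ^ (2 * (n : ℕ)), -((a : ℂ) * ω ^ (22 * (n : ℕ)))]

/-- The set of the 120 vectors. -/
def T : Set (Fin 2 → ℂ) :=
  {v | ∃ n : Fin 30, v = A n ∨ v = B n ∨ v = C n ∨ v = D n}

/-- The real inner product on ℂ²: ⟨v,w⟩_ℝ = Re(Σᵢ vᵢ · conj(wᵢ)). -/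
def rinner (v w : Fin 2 → ℂ) : ℝ := (∑ i, v i * star (w i)).re

/-- The associated Euclidean norm. -/
def enorm (v : Fin 2 → ℂ) : ℝ := Real.sqrt (rinner v v)

/-!
Turning the two coordinates by `ω ^ 2` and `ω ^ 22` permutes each of the four cycles (it is the
Coxeter element of `H₄`), so `⟨v, w⟩` depends only on the two cycles and on the difference `k` of
the exponents of `ω`, as `P cos (kπ/30) + Q cos (11kπ/30)`. The numbers `2 cos (π/15)` and
`2 cos (11π/15)` are conjugate over `ℚ(τ)`, with sum `τ - 1` and product `-(τ + 1)`. Hence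
along steps of two in `k` the inner products satisfy a recurrence with coefficients in `ℤ[τ]`,

  `f (n + 4) = (τ - 1) (f (n + 1) + f (n + 2) + f (n + 3)) - f n`.

As `f` is even in `k`, two initial values per pair of cycles determine everything; they
lie in `½ℤ[τ]`, and a computation in `ℤ[τ]` over one period finishes the proof.
-/

section PalindromicRecurrence

variable {R S : Type*} [CommRing R] [CommRing S]

/-- The solution of the recurrence `f (n + 4) = t * (f (n + 1) + f (n + 2) + f (n + 3)) - f n`
with initial values `w, x, y, z`. The recursion shifts the window of initial values, so that
terms can be evaluated by kernel reduction. -/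
def palindromicSeq (t w x y z : R) : ℕ → R
  | 0 => w
  | n + 1 => palindromicSeq t x y z (t * (x + y + z) - w) n

lemma map_palindromicSeq (φ : R →+* S) (t w x y z : R) (n : ℕ) :
    φ (palindromicSeq t w x y z n) = palindromicSeq (φ t) (φ w) (φ x) (φ y) (φ z) n := by
  induction n generalizing w x y z with
  | zero => rfl
  | succ n ih => simp only [palindromicSeq, ih, map_sub, map_mul, map_add]

lemma eq_palindromicSeq {t : R} {f : ℕ → R}
    (hf : ∀ n, f (n + 4) = t * (f (n + 1) + f (n + 2) + f (n + 3)) - f n) (n : ℕ) :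
    f n = palindromicSeq t (f 0) (f 1) (f 2) (f 3) n := by
  induction n generalizing f with
  | zero => rfl
  | succ n ih =>
    rw [palindromicSeq, ← hf 0]
    exact ih (f := fun k ↦ f (k + 1)) fun k ↦ hf (k + 1)

end PalindromicRecurrence

lemma τ_pos : 0 < τ := Real.goldenRatio_pos

lemma τ_sq : τ ^ 2 = τ + 1 := Real.goldenRatio_sq

/-- The ring `ℤ[τ]` of golden integers, with `QuadraticAlgebra.omega` in the role of `τ`. -/
abbrev GoldenInt : Type := QuadraticAlgebra ℤ 1 1

namespace GoldenInt

/-- The golden ratio as a golden integer. -/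
abbrev tau : GoldenInt := QuadraticAlgebra.omega

/-- The real embedding of the golden integers that sends `tau` to the golden ratio `τ`. -/
def toReal : GoldenInt →ₐ[ℤ] ℝ :=
  QuadraticAlgebra.lift ⟨τ, by rw [one_smul, one_smul, ← sq, τ_sq, add_comm]⟩

@[simp]
lemma toReal_tau : toReal tau = τ := by
  simp [toReal, QuadraticAlgebra.lift]

@[simp]
lemma toReal_two : toReal 2 = 2 := map_ofNat toReal 2

/-- Twice the cosines of the angles between roots of `H₄`. -/
def doubledCosines : Finset GoldenInt :=
  {-2, -tau, -1, -(tau - 1), 0, tau - 1, 1, tau, 2}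

end GoldenInt

open GoldenInt

/-- The cosines of the angles between roots of `H₄`. -/
def rootCosines : Set ℝ :=
  {-1, -(τ / 2), -(1 / 2), -((τ - 1) / 2), 0, (τ - 1) / 2, 1 / 2, τ / 2, 1}

lemma mem_rootCosines_of_two_mul_eq {r : ℝ} {x : GoldenInt} (hx : x ∈ doubledCosines)
    (hr : 2 * r = toReal x) : r ∈ rootCosines := by
  have hr' : r = toReal x / 2 := by linarith
  rw [hr', rootCosines]
  simp only [doubledCosines, Finset.mem_insert, Finset.mem_singleton] at hx
  rcases hx with rfl | rfl | rfl | rfl | rfl | rfl | rfl | rfl | rfl <;>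
    simp [neg_div, -neg_sub]

lemma mul_cos_sub_add_mul_cos_add (P Q u v : ℝ) :
    P * Real.cos (u - v) + Q * Real.cos (u + v) =
      (P + Q) * (Real.cos u * Real.cos v) + (P - Q) * (Real.sin u * Real.sin v) := by
  rw [Real.cos_sub, Real.cos_add]
  ring

lemma cos_add_four_mul {t δ : ℝ} (hδ : 2 * Real.cos (2 * δ) = t * (1 + 2 * Real.cos δ)) (x : ℝ) :
    Real.cos (x + 4 * δ) =
      t * (Real.cos (x + δ) + Real.cos (x + 2 * δ) + Real.cos (x + 3 * δ)) - Real.cos x := by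
  have outer := Real.two_mul_cos_mul_cos (x + 2 * δ) (2 * δ)
  have inner := Real.two_mul_cos_mul_cos (x + 2 * δ) δ
  rw [show x + 2 * δ - 2 * δ = x by ring, show x + 2 * δ + 2 * δ = x + 4 * δ by ring] at outer
  rw [show x + 2 * δ - δ = x + δ by ring, show x + 2 * δ + δ = x + 3 * δ by ring] at inner
  linear_combination Real.cos (x + 2 * δ) * hδ - outer + t * inner

lemma cos_pi_div_five_eq : Real.cos (π / 5) = τ / 2 := by
  rw [Real.cos_pi_div_five, τ]
  ring

lemma cos_two_pi_div_five_eq : Real.cos (2 * π / 5) = (τ - 1) / 2 := by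
  rw [mul_div_assoc, Real.cos_two_mul, cos_pi_div_five_eq]
  linear_combination τ_sq / 2

/-- The sine of `2π/5`. It equals `5^(1/4) τ^(1/2) / 2`, hence cancels the `5^(-1/4)` in `k0`. -/
def σ : ℝ := Real.sin (2 * π / 5)

lemma σ_pos : 0 < σ := Real.sin_pos_of_pos_of_lt_pi (by positivity) (by linarith [Real.pi_pos])

lemma four_mul_σ_sq : 4 * σ ^ 2 = τ + 2 := by
  rw [σ, Real.sin_sq, cos_two_pi_div_five_eq]
  linear_combination -τ_sq

lemma sin_pi_div_five_eq : Real.sin (π / 5) = (τ - 1) * σ := by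
  rw [σ, mul_div_assoc, Real.sin_two_mul, cos_pi_div_five_eq]
  linear_combination -Real.sin (π / 5) * τ_sq

/-- The number `3^(1/2) 5^(1/4) τ^(1/2)`, which clears the radicals of `a² - d²`, `b² - c²`, `ad`
and `bc`. -/
def ρ : ℝ := 2 * √3 * σ

lemma ρ_pos : 0 < ρ := by
  have := σ_pos
  unfold ρ
  positivity

lemma ρ_sq : ρ ^ 2 = 3 * τ + 6 := by
  rw [ρ]
  have sqrt_three_sq : √3 ^ 2 = (3 : ℝ) := Real.sq_sqrt (by norm_num)
  linear_combination 4 * σ ^ 2 * sqrt_three_sq + 3 * four_mul_σ_sq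

lemma two_cos_pi_div_fifteen_add :
    2 * Real.cos (π / 15) + 2 * Real.cos (11 * (π / 15)) = τ - 1 := by
  rw [show 11 * (π / 15) = 2 * π / 5 + π / 3 by ring, show π / 15 = 2 * π / 5 - π / 3 by ring,
    mul_cos_sub_add_mul_cos_add, cos_two_pi_div_five_eq, Real.cos_pi_div_three]
  ring

lemma two_cos_pi_div_fifteen_mul :
    2 * Real.cos (π / 15) * (2 * Real.cos (11 * (π / 15))) = -(τ + 1) := by
  have h := Real.two_mul_cos_mul_cos (11 * (π / 15)) (π / 15)
  rw [show 11 * (π / 15) - π / 15 = π - π / 3 by ring,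
    show 11 * (π / 15) + π / 15 = π - π / 5 by ring, Real.cos_pi_sub, Real.cos_pi_sub,
    cos_pi_div_five_eq, Real.cos_pi_div_three] at h
  linear_combination 2 * h

lemma two_cos_two_mul_pi_div_fifteen :
    2 * Real.cos (2 * (π / 15)) = (τ - 1) * (1 + 2 * Real.cos (π / 15)) := by
  rw [Real.cos_two_mul]
  linear_combination 2 * Real.cos (π / 15) * two_cos_pi_div_fifteen_add - two_cos_pi_div_fifteen_mul

lemma two_cos_two_mul_eleven_pi_div_fifteen :
    2 * Real.cos (2 * (11 * (π / 15))) = (τ - 1) * (1 + 2 * Real.cos (11 * (π / 15))) := by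
  rw [Real.cos_two_mul]
  linear_combination
    2 * Real.cos (11 * (π / 15)) * two_cos_pi_div_fifteen_add - two_cos_pi_div_fifteen_mul

/-- The real inner product of `(x, y)` and `(x', y')`, turned relative to each other by `ω ^ k` in
the first and by `ω ^ (11 * k)` in the second coordinate, as a function of `P = x * x'` and
`Q = y * y'`. -/
def cosSum (P Q : ℝ) (k : ℤ) : ℝ :=
  P * Real.cos (k * (π / 30)) + Q * Real.cos (11 * (k * (π / 30)))

section CosSum

variable (P Q : ℝ)

lemma cosSum_neg (k : ℤ) : cosSum P Q (-k) = cosSum P Q k := by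
  simp only [cosSum, Int.cast_neg, neg_mul, mul_neg, Real.cos_neg]

lemma cosSum_add_sixty_mul (k m : ℤ) : cosSum P Q (k + 60 * m) = cosSum P Q k := by
  rw [cosSum, cosSum,
    show ((k + 60 * m : ℤ) : ℝ) * (π / 30) = k * (π / 30) + m * (2 * π) by push_cast; ring,
    show 11 * (k * (π / 30) + m * (2 * π)) = 11 * (k * (π / 30)) + (11 * m : ℤ) * (2 * π) by
      push_cast; ring,
    Real.cos_add_int_mul_two_pi, Real.cos_add_int_mul_two_pi]

lemma cosSum_add_eight (k : ℤ) :
    cosSum P Q (k + 8) =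
      (τ - 1) * (cosSum P Q (k + 2) + cosSum P Q (k + 4) + cosSum P Q (k + 6)) - cosSum P Q k := by
  have first := cos_add_four_mul two_cos_two_mul_pi_div_fifteen (k * (π / 30))
  have second := cos_add_four_mul two_cos_two_mul_eleven_pi_div_fifteen (11 * (k * (π / 30)))
  simp only [cosSum, Int.cast_add, Int.cast_ofNat]
  ring_nf at first second ⊢
  rw [first, second]
  ring

lemma cosSum_zero : cosSum P Q 0 = P + Q := by
  simp [cosSum]

lemma cosSum_one : 4 * cosSum P Q 1 = τ * (√3 * (P + Q)) + (τ - 1) * (2 * σ * (P - Q)) := by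
  rw [cosSum, Int.cast_one, show 11 * (1 * (π / 30)) = π / 5 + π / 6 by ring,
    show 1 * (π / 30) = π / 5 - π / 6 by ring, mul_cos_sub_add_mul_cos_add,
    cos_pi_div_five_eq, sin_pi_div_five_eq, Real.cos_pi_div_six, Real.sin_pi_div_six]
  ring

lemma cosSum_two : 4 * cosSum P Q 2 = (τ - 1) * (P + Q) + ρ * (P - Q) := by
  rw [cosSum, Int.cast_ofNat, show 11 * (2 * (π / 30)) = 2 * π / 5 + π / 3 by ring,
    show 2 * (π / 30) = 2 * π / 5 - π / 3 by ring, mul_cos_sub_add_mul_cos_add,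
    cos_two_pi_div_five_eq, ← σ, ρ, Real.cos_pi_div_three, Real.sin_pi_div_three]
  ring

lemma cosSum_three : cosSum P Q 3 = σ * (P - Q) := by
  rw [cosSum, Int.cast_ofNat, show 11 * (3 * (π / 30)) = π - 2 * π / 5 + π / 2 by ring,
    show 3 * (π / 30) = π - 2 * π / 5 - π / 2 by ring, mul_cos_sub_add_mul_cos_add,
    Real.sin_pi_sub, ← σ, Real.cos_pi_div_two, Real.sin_pi_div_two]
  ring

end CosSum

section Membership

variable {P Q : ℝ}

lemma two_mul_cosSum_eq_toReal {k : ℤ} {w x y z : GoldenInt}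
    (hw : 2 * cosSum P Q k = toReal w) (hx : 2 * cosSum P Q (k + 2) = toReal x)
    (hy : 2 * cosSum P Q (k + 4) = toReal y) (hz : 2 * cosSum P Q (k + 6) = toReal z) (n : ℕ) :
    2 * cosSum P Q (k + 2 * n) = toReal (palindromicSeq (tau - 1) w x y z n) := by
  have recurrence (m : ℕ) : 2 * cosSum P Q (k + 2 * (m + 4 : ℕ)) =
      (τ - 1) * (2 * cosSum P Q (k + 2 * (m + 1 : ℕ)) + 2 * cosSum P Q (k + 2 * (m + 2 : ℕ)) +
        2 * cosSum P Q (k + 2 * (m + 3 : ℕ))) - 2 * cosSum P Q (k + 2 * m) := by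
    have h := cosSum_add_eight P Q (k + 2 * m)
    push_cast
    ring_nf at h ⊢
    linear_combination 2 * h
  have image := map_palindromicSeq (toReal : GoldenInt →+* ℝ) (tau - 1) w x y z n
  simp only [RingHom.coe_coe, map_sub, toReal_tau, map_one, ← hw, ← hx, ← hy, ← hz] at image
  rw [image]
  simpa using eq_palindromicSeq (f := fun m : ℕ ↦ 2 * cosSum P Q (k + 2 * m)) recurrence n

lemma cosSum_mem_rootCosines_of_even (x y z : GoldenInt)
    (hx : 2 * (P + Q) = toReal x)
    (hy : (τ - 1) * (P + Q) + ρ * (P - Q) = 2 * toReal y)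
    (hz : 2 * z = (tau - 1) * (x + 2 * y))
    (hseq : ∀ n < 31, palindromicSeq (tau - 1) y x y z n ∈ doubledCosines)
    {k : ℤ} (hk : Even k) : cosSum P Q k ∈ rootCosines := by
  have h₀ : 2 * cosSum P Q 0 = toReal x := by rw [cosSum_zero, hx]
  have h₂ : 2 * cosSum P Q 2 = toReal y := by linarith [cosSum_two P Q]
  have h₄ : 2 * cosSum P Q 4 = toReal z := by
    have hz' := congrArg toReal hz
    have symmetric := cosSum_add_eight P Q (-4)
    simp only [map_mul, map_add, map_sub, map_one, toReal_two, toReal_tau, ← h₀, ← h₂] at hz'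
    norm_num [cosSum_neg] at symmetric
    linarith
  obtain ⟨n, m, hn, hkn⟩ : ∃ (n : ℕ) (m : ℤ), n < 31 ∧ k = -2 + 2 * n + 60 * m := by
    refine ⟨(k % 60 / 2).toNat + 1, k / 60, ?_, ?_⟩ <;> grind
  rw [hkn, cosSum_add_sixty_mul]
  refine mem_rootCosines_of_two_mul_eq (hseq n hn)
    (two_mul_cosSum_eq_toReal ?_ ?_ ?_ ?_ n) <;> norm_num [cosSum_neg, *]

lemma cosSum_mem_rootCosines_of_odd (x y : GoldenInt)
    (hx : τ * (√3 * (P + Q)) + (τ - 1) * (2 * σ * (P - Q)) = 2 * toReal x)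
    (hy : 2 * σ * (P - Q) = toReal y)
    (hseq : ∀ n < 32, palindromicSeq (tau - 1) y x x y n ∈ doubledCosines)
    {k : ℤ} (hk : Odd k) : cosSum P Q k ∈ rootCosines := by
  have h₁ : 2 * cosSum P Q 1 = toReal x := by linarith [cosSum_one P Q]
  have h₃ : 2 * cosSum P Q 3 = toReal y := by rw [cosSum_three, ← hy, mul_assoc]
  obtain ⟨n, m, hn, hkn⟩ : ∃ (n : ℕ) (m : ℤ), n < 32 ∧ k = -3 + 2 * n + 60 * m := by
    refine ⟨(k % 60 / 2).toNat + 2, k / 60, ?_, ?_⟩ <;> grind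
  rw [hkn, cosSum_add_sixty_mul]
  refine mem_rootCosines_of_two_mul_eq (hseq n hn)
    (two_mul_cosSum_eq_toReal ?_ ?_ ?_ ?_ n) <;> norm_num [cosSum_neg, *]

end Membership

lemma k0_pos : 0 < k0 := by
  unfold k0
  positivity

lemma k0_sq : k0 ^ 2 = (2 * τ - 1) / 15 := by
  have three_rpow_sq : ((3 : ℝ) ^ (-(1 : ℝ) / 2)) ^ 2 = 3⁻¹ := by
    rw [← Real.rpow_mul_natCast (by norm_num)]
    norm_num [Real.rpow_neg_one]
  have five_rpow_sq : ((5 : ℝ) ^ (-(1 : ℝ) / 4)) ^ 2 = (√5)⁻¹ := by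
    rw [← Real.rpow_mul_natCast (by norm_num), Real.sqrt_eq_rpow, ← Real.rpow_neg (by norm_num)]
    norm_num
  have sqrt_five_sq : √5 ^ 2 = (5 : ℝ) := Real.sq_sqrt (by norm_num)
  rw [k0, mul_pow, three_rpow_sq, five_rpow_sq, show 2 * τ - 1 = √5 by rw [τ]; ring]
  field_simp
  linear_combination -3 * sqrt_five_sq

lemma ρ_mul_k0_rpow : ρ * (k0 * τ ^ ((3 : ℝ) / 2)) = τ ^ 2 := by
  have := k0_pos
  have := τ_pos
  have := ρ_pos
  have rpow_sq : (τ ^ ((3 : ℝ) / 2)) ^ 2 = τ ^ 3 := by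
    rw [← Real.rpow_mul_natCast τ_pos.le, ← Real.rpow_natCast]
    norm_num
  refine (sq_eq_sq₀ (by positivity) (by positivity)).1 ?_
  rw [mul_pow, ρ_sq, mul_pow, rpow_sq]
  linear_combination (3 * τ + 6) * τ ^ 3 * k0_sq + 2 / 5 * τ ^ 3 * τ_sq

lemma ρ_mul_k0_rpow_neg : ρ * (k0 * τ ^ (-((3 : ℝ) / 2))) = τ - 1 := by
  have rpow_eq : τ ^ ((3 : ℝ) / 2) = τ ^ 3 * τ ^ (-((3 : ℝ) / 2)) := by
    rw [← Real.rpow_natCast, ← Real.rpow_add τ_pos]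
    norm_num
  have h := ρ_mul_k0_rpow
  rw [rpow_eq] at h
  refine mul_left_cancel₀ (pow_pos τ_pos 3).ne' ?_
  linear_combination h - τ ^ 2 * τ_sq

lemma k0_rpow_le_one : k0 * τ ^ ((3 : ℝ) / 2) ≤ 1 := by
  refine le_of_mul_le_mul_left ?_ ρ_pos
  rw [ρ_mul_k0_rpow, mul_one]
  refine le_of_sq_le_sq ?_ ρ_pos.le
  rw [ρ_sq]
  nlinarith [τ_sq]

lemma k0_rpow_neg_le_one : k0 * τ ^ (-((3 : ℝ) / 2)) ≤ 1 := by
  refine le_trans ?_ k0_rpow_le_one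
  gcongr
  · exact k0_pos.le
  · exact Real.one_lt_goldenRatio.le
  · norm_num

lemma a_sq : a ^ 2 = (1 + k0 * τ ^ ((3 : ℝ) / 2)) / 2 :=
  Real.sq_sqrt (by have := k0_pos; have := τ_pos; positivity)

lemma b_sq : b ^ 2 = (1 + k0 * τ ^ (-((3 : ℝ) / 2))) / 2 :=
  Real.sq_sqrt (by have := k0_pos; have := τ_pos; positivity)

lemma c_sq : c ^ 2 = (1 - k0 * τ ^ (-((3 : ℝ) / 2))) / 2 :=
  Real.sq_sqrt (by linarith [k0_rpow_neg_le_one])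

lemma d_sq : d ^ 2 = (1 - k0 * τ ^ ((3 : ℝ) / 2)) / 2 :=
  Real.sq_sqrt (by linarith [k0_rpow_le_one])

lemma a_nonneg : 0 ≤ a := Real.sqrt_nonneg _

lemma b_nonneg : 0 ≤ b := Real.sqrt_nonneg _

lemma c_nonneg : 0 ≤ c := Real.sqrt_nonneg _

lemma d_nonneg : 0 ≤ d := Real.sqrt_nonneg _

lemma a_sq_add_d_sq : a ^ 2 + d ^ 2 = 1 := by
  rw [a_sq, d_sq]
  ring

lemma b_sq_add_c_sq : b ^ 2 + c ^ 2 = 1 := by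
  rw [b_sq, c_sq]
  ring

lemma ρ_mul_a_sq_sub_d_sq : ρ * (a ^ 2 - d ^ 2) = τ ^ 2 := by
  rw [a_sq, d_sq, ← ρ_mul_k0_rpow]
  ring

lemma ρ_mul_b_sq_sub_c_sq : ρ * (b ^ 2 - c ^ 2) = τ - 1 := by
  rw [b_sq, c_sq, ← ρ_mul_k0_rpow_neg]
  ring

lemma ρ_mul_ad : ρ * (a * d) = 1 := by
  have := a_nonneg
  have := d_nonneg
  have := ρ_pos
  refine (sq_eq_sq₀ (by positivity) zero_le_one).1 ?_
  have sum_sq : (a ^ 2 + d ^ 2) ^ 2 = 1 := by rw [a_sq_add_d_sq, one_pow]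
  have difference_sq : (ρ * (a ^ 2 - d ^ 2)) ^ 2 = (τ ^ 2) ^ 2 := by rw [ρ_mul_a_sq_sub_d_sq]
  linear_combination ρ ^ 2 / 4 * sum_sq - difference_sq / 4 + ρ_sq / 4
    - (τ ^ 2 + τ + 2) / 4 * τ_sq

lemma ρ_mul_bc : ρ * (b * c) = τ := by
  have := b_nonneg
  have := c_nonneg
  have := ρ_pos
  refine (sq_eq_sq₀ (by positivity) τ_pos.le).1 ?_
  have sum_sq : (b ^ 2 + c ^ 2) ^ 2 = 1 := by rw [b_sq_add_c_sq, one_pow]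
  have difference_sq : (ρ * (b ^ 2 - c ^ 2)) ^ 2 = (τ - 1) ^ 2 := by rw [ρ_mul_b_sq_sub_c_sq]
  linear_combination ρ ^ 2 / 4 * sum_sq - difference_sq / 4 + ρ_sq / 4 - 5 / 4 * τ_sq

lemma ad_mul_bc : a * d * (b * c) = (2 * τ - 1) / 15 := by
  refine mul_left_cancel₀ (pow_pos ρ_pos 2).ne' ?_
  linear_combination ρ * (b * c) * ρ_mul_ad + ρ_mul_bc - (2 * τ - 1) / 15 * ρ_sq - 2 / 5 * τ_sq

lemma a_sq_sub_d_sq_mul_b_sq_sub_c_sq :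
    (a ^ 2 - d ^ 2) * (b ^ 2 - c ^ 2) = (2 * τ - 1) / 15 := by
  refine mul_left_cancel₀ (pow_pos ρ_pos 2).ne' ?_
  linear_combination ρ * (b ^ 2 - c ^ 2) * ρ_mul_a_sq_sub_d_sq + τ ^ 2 * ρ_mul_b_sq_sub_c_sq
    - (2 * τ - 1) / 15 * ρ_sq + (τ - 2 / 5) * τ_sq

lemma ab_add_cd_sq : (a * b + c * d) ^ 2 = τ ^ 2 / 3 := by
  linear_combination (b ^ 2 + c ^ 2) / 2 * a_sq_add_d_sq + b_sq_add_c_sq / 2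
    + a_sq_sub_d_sq_mul_b_sq_sub_c_sq / 2 + 2 * ad_mul_bc - τ_sq / 3

lemma ac_add_bd_sq : (a * c + b * d) ^ 2 = (τ + 2) / 5 := by
  linear_combination (b ^ 2 + c ^ 2) / 2 * a_sq_add_d_sq + b_sq_add_c_sq / 2
    - a_sq_sub_d_sq_mul_b_sq_sub_c_sq / 2 + 2 * ad_mul_bc

lemma sqrt_three_mul_ab_add_cd : √3 * (a * b + c * d) = τ := by
  have := a_nonneg
  have := b_nonneg
  have := c_nonneg
  have := d_nonneg
  refine (sq_eq_sq₀ (by positivity) τ_pos.le).1 ?_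
  rw [mul_pow, Real.sq_sqrt (by norm_num), ab_add_cd_sq]
  ring

lemma two_σ_mul_ac_add_bd : 2 * σ * (a * c + b * d) = τ := by
  have := a_nonneg
  have := b_nonneg
  have := c_nonneg
  have := d_nonneg
  have := σ_pos
  refine (sq_eq_sq₀ (by positivity) τ_pos.le).1 ?_
  rw [mul_pow, ac_add_bd_sq]
  linear_combination (τ + 2) / 5 * four_mul_σ_sq - 4 / 5 * τ_sq

lemma two_σ_mul_ab_sub_cd : 2 * σ * (a * b - c * d) = 1 := by
  refine mul_left_cancel₀ τ_pos.ne' ?_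
  calc
    τ * (2 * σ * (a * b - c * d)) = √3 * (a * b + c * d) * (2 * σ * (a * b - c * d)) := by
      rw [sqrt_three_mul_ab_add_cd]
    _ = ((b ^ 2 + c ^ 2) * (ρ * (a ^ 2 - d ^ 2)) +
          (a ^ 2 + d ^ 2) * (ρ * (b ^ 2 - c ^ 2))) / 2 := by
      rw [ρ]
      ring
    _ = τ * 1 := by
      rw [b_sq_add_c_sq, a_sq_add_d_sq, ρ_mul_a_sq_sub_d_sq, ρ_mul_b_sq_sub_c_sq]
      linear_combination τ_sq / 2

lemma sqrt_three_mul_ac_sub_bd : √3 * (a * c - b * d) = τ - 1 := by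
  refine mul_left_cancel₀ τ_pos.ne' ?_
  calc
    τ * (√3 * (a * c - b * d)) = 2 * σ * (a * c + b * d) * (√3 * (a * c - b * d)) := by
      rw [two_σ_mul_ac_add_bd]
    _ = ((b ^ 2 + c ^ 2) * (ρ * (a ^ 2 - d ^ 2)) -
          (a ^ 2 + d ^ 2) * (ρ * (b ^ 2 - c ^ 2))) / 2 := by
      rw [ρ]
      ring
    _ = τ * (τ - 1) := by
      rw [b_sq_add_c_sq, a_sq_add_d_sq, ρ_mul_a_sq_sub_d_sq, ρ_mul_b_sq_sub_c_sq]
      linear_combination -τ_sq / 2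

/-- The point `(x, y)` turned by `ω ^ k` in the first and by `ω ^ (11 * k)` in the second
coordinate. Each of the four cycles is a family of such points with fixed `x` and `y`. -/
def orbitVec (x y : ℝ) (k : ℕ) : Fin 2 → ℂ :=
  ![(x : ℂ) * ω ^ k, (y : ℂ) * ω ^ (11 * k)]

lemma A_eq_orbitVec (n : Fin 30) : A n = orbitVec a d (2 * n) := by
  simp only [A, orbitVec]
  ring_nf

lemma B_eq_orbitVec (n : Fin 30) : B n = orbitVec b c (2 * n + 1) := by
  simp only [B, orbitVec]
  ring_nf

lemma C_eq_orbitVec (n : Fin 30) : C n = orbitVec c (-b) (2 * n + 1) := by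
  simp only [C, orbitVec, Complex.ofReal_neg]
  ring_nf

lemma D_eq_orbitVec (n : Fin 30) : D n = orbitVec d (-a) (2 * n) := by
  simp only [D, orbitVec, Complex.ofReal_neg]
  ring_nf

lemma re_ω_pow_mul_star_ω_pow (k l : ℕ) :
    (ω ^ k * star (ω ^ l)).re = Real.cos (k * (π / 30) - l * (π / 30)) := by
  have ω_pow (m : ℕ) : ω ^ m = Complex.exp ((m * (π / 30) : ℝ) * Complex.I) := by
    rw [ω, ← Complex.exp_nat_mul]
    push_cast
    ring_nf
  rw [ω_pow, ω_pow, Complex.star_def, ← Complex.exp_conj, map_mul, Complex.conj_I,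
    Complex.conj_ofReal, ← Complex.exp_add, ← Complex.exp_ofReal_mul_I_re]
  push_cast
  ring_nf

lemma rinner_orbitVec (x y x' y' : ℝ) (k l : ℕ) :
    rinner (orbitVec x y k) (orbitVec x' y' l) = cosSum (x * x') (y * y') (k - l) := by
  have factor (u u' : ℝ) (i j : ℕ) :
      ((u : ℂ) * ω ^ i * star ((u' : ℂ) * ω ^ j)).re =
        u * u' * Real.cos (i * (π / 30) - j * (π / 30)) := by
    rw [← re_ω_pow_mul_star_ω_pow, ← Complex.re_ofReal_mul, star_mul', Complex.star_def,
      Complex.conj_ofReal]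
    push_cast
    ring_nf
  simp only [rinner, orbitVec, Fin.sum_univ_two, Matrix.cons_val_zero, Matrix.cons_val_one,
    Complex.add_re, factor, cosSum]
  push_cast
  ring_nf

lemma rinner_comm (v w : Fin 2 → ℂ) : rinner v w = rinner w v := by
  simp only [rinner, Complex.re_sum, Complex.star_def, Complex.mul_re, Complex.conj_re,
    Complex.conj_im]
  exact Finset.sum_congr rfl fun i _ ↦ by ring

lemma rinner_A_A_mem (n m : Fin 30) : rinner (A n) (A m) ∈ rootCosines := by
  rw [A_eq_orbitVec, A_eq_orbitVec, rinner_orbitVec]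
  refine cosSum_mem_rootCosines_of_even 2 tau tau ?_ ?_
    (by decide) (by decide +kernel) (by grind)
  · rw [toReal_two]
    linear_combination 2 * a_sq_add_d_sq
  · rw [toReal_tau]
    linear_combination (τ - 1) * a_sq_add_d_sq + ρ_mul_a_sq_sub_d_sq + τ_sq

lemma rinner_D_D_mem (n m : Fin 30) : rinner (D n) (D m) ∈ rootCosines := by
  rw [D_eq_orbitVec, D_eq_orbitVec, rinner_orbitVec]
  refine cosSum_mem_rootCosines_of_even 2 (-1) 0 ?_ ?_
    (by decide) (by decide +kernel) (by grind)
  · rw [toReal_two]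
    linear_combination 2 * a_sq_add_d_sq
  · rw [map_neg, map_one]
    linear_combination (τ - 1) * a_sq_add_d_sq - ρ_mul_a_sq_sub_d_sq - τ_sq

lemma rinner_A_D_mem (n m : Fin 30) : rinner (A n) (D m) ∈ rootCosines := by
  rw [A_eq_orbitVec, D_eq_orbitVec, rinner_orbitVec]
  refine cosSum_mem_rootCosines_of_even 0 1 (tau - 1) ?_ ?_
    (by decide) (by decide +kernel) (by grind)
  · rw [map_zero]
    ring
  · rw [map_one]
    linear_combination 2 * ρ_mul_ad

lemma rinner_B_B_mem (n m : Fin 30) : rinner (B n) (B m) ∈ rootCosines := by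
  rw [B_eq_orbitVec, B_eq_orbitVec, rinner_orbitVec]
  refine cosSum_mem_rootCosines_of_even 2 (tau - 1) 1 ?_ ?_
    (by decide) (by decide +kernel) (by grind)
  · rw [toReal_two]
    linear_combination 2 * b_sq_add_c_sq
  · rw [map_sub, toReal_tau, map_one]
    linear_combination (τ - 1) * b_sq_add_c_sq + ρ_mul_b_sq_sub_c_sq

lemma rinner_C_C_mem (n m : Fin 30) : rinner (C n) (C m) ∈ rootCosines := by
  rw [C_eq_orbitVec, C_eq_orbitVec, rinner_orbitVec]
  refine cosSum_mem_rootCosines_of_even 2 0 (tau - 1) ?_ ?_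
    (by decide) (by decide +kernel) (by grind)
  · rw [toReal_two]
    linear_combination 2 * b_sq_add_c_sq
  · rw [map_zero]
    linear_combination (τ - 1) * b_sq_add_c_sq - ρ_mul_b_sq_sub_c_sq

lemma rinner_B_C_mem (n m : Fin 30) : rinner (B n) (C m) ∈ rootCosines := by
  rw [B_eq_orbitVec, C_eq_orbitVec, rinner_orbitVec]
  refine cosSum_mem_rootCosines_of_even 0 tau 1 ?_ ?_
    (by decide) (by decide +kernel) (by grind)
  · rw [map_zero]
    ring
  · rw [toReal_tau]
    linear_combination 2 * ρ_mul_bc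

lemma rinner_B_A_mem (n m : Fin 30) : rinner (B n) (A m) ∈ rootCosines := by
  rw [B_eq_orbitVec, A_eq_orbitVec, rinner_orbitVec]
  refine cosSum_mem_rootCosines_of_odd tau 1 ?_ ?_ (by decide +kernel) (by grind)
  · rw [toReal_tau]
    linear_combination τ * sqrt_three_mul_ab_add_cd + (τ - 1) * two_σ_mul_ab_sub_cd + τ_sq
  · rw [map_one]
    linear_combination two_σ_mul_ab_sub_cd

lemma rinner_C_D_mem (n m : Fin 30) : rinner (C n) (D m) ∈ rootCosines := by
  rw [C_eq_orbitVec, D_eq_orbitVec, rinner_orbitVec]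
  refine cosSum_mem_rootCosines_of_odd 1 (-1) ?_ ?_ (by decide +kernel) (by grind)
  · rw [map_one]
    linear_combination τ * sqrt_three_mul_ab_add_cd - (τ - 1) * two_σ_mul_ab_sub_cd + τ_sq
  · rw [map_neg, map_one]
    linear_combination -two_σ_mul_ab_sub_cd

lemma rinner_C_A_mem (n m : Fin 30) : rinner (C n) (A m) ∈ rootCosines := by
  rw [C_eq_orbitVec, A_eq_orbitVec, rinner_orbitVec]
  refine cosSum_mem_rootCosines_of_odd 1 tau ?_ ?_ (by decide +kernel) (by grind)
  · rw [map_one]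
    linear_combination τ * sqrt_three_mul_ac_sub_bd + (τ - 1) * two_σ_mul_ac_add_bd + 2 * τ_sq
  · rw [toReal_tau]
    linear_combination two_σ_mul_ac_add_bd

lemma rinner_B_D_mem (n m : Fin 30) : rinner (B n) (D m) ∈ rootCosines := by
  rw [B_eq_orbitVec, D_eq_orbitVec, rinner_orbitVec]
  refine cosSum_mem_rootCosines_of_odd 0 tau ?_ ?_ (by decide +kernel) (by grind)
  · rw [map_zero]
    linear_combination -τ * sqrt_three_mul_ac_sub_bd + (τ - 1) * two_σ_mul_ac_add_bd
  · rw [toReal_tau]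
    linear_combination two_σ_mul_ac_add_bd

/-- inner products of members of T lie in
{−1, −τ/2, −1/2, −(τ−1)/2, 0, (τ−1)/2, 1/2, τ/2, 1}. -/
theorem stmt19 :
    ∀ v ∈ T, ∀ w ∈ T, rinner v w ∈
      ({-1, -(τ/2), -(1/2), -((τ-1)/2), 0, (τ-1)/2, 1/2, τ/2, 1} : Set ℝ) := by
  rintro v ⟨n, rfl | rfl | rfl | rfl⟩ w ⟨m, rfl | rfl | rfl | rfl⟩
  · exact rinner_A_A_mem n m
  · exact rinner_comm _ _ ▸ rinner_B_A_mem m n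
  · exact rinner_comm _ _ ▸ rinner_C_A_mem m n
  · exact rinner_A_D_mem n m
  · exact rinner_B_A_mem n m
  · exact rinner_B_B_mem n m
  · exact rinner_B_C_mem n m
  · exact rinner_B_D_mem n m
  · exact rinner_C_A_mem n m
  · exact rinner_comm _ _ ▸ rinner_B_C_mem m n
  · exact rinner_C_C_mem n m
  · exact rinner_C_D_mem n m
  · exact rinner_comm _ _ ▸ rinner_A_D_mem m n
  · exact rinner_comm _ _ ▸ rinner_B_D_mem m n
  · exact rinner_comm _ _ ▸ rinner_C_D_mem m n
  · exact rinner_D_D_mem n m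

end Triacontagonal
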